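/- Let n, p ∈ ℕ. Let A : ℝ → Matrix (Fin n) (Fin n) ℝ and B : ℝ → Matrix (Fin n) (Fin p) ℝ be continuous on [0,1], and let Φ : ℝ → Matrix (Fin n) (Fin n) ℝ satisfy Φ 0 = 1, Φ t invertible for every t ∈ [0,1], and Φ has derivative A t * Φ t at every t ∈ [0,1] within [0,1]. Suppose the Gramian W := ∫ s in (0:ℝ)..1, ((Φ s)⁻¹ * B s) * ((Φ s)⁻¹ * B s)ᵀ is invertible. Then for every z₀, z₁ ∈ (Fin n → ℝ) there exist a continuous control v : ℝ → (Fin p → ℝ) and a function z : ℝ → (Fin n → ℝ) with z 0 = z₀, z 1 = z₁, and for every t ∈ [0,1], z has derivative A t *ᵥ z t + B t *ᵥ v t at t within [0,1]. -/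

import Mathlib

open scoped Matrix

attribute [local instance] Matrix.frobeniusNormedAddCommGroup Matrix.frobeniusNormedSpace

/-- Product rule for a matrix-valued curve acting on a vector-valued curve. -/
theorem HasDerivWithinAt.matrix_mulVec {m n : Type*} [Fintype m] [Fintype n]
    {F : ℝ → Matrix m n ℝ} {F' : Matrix m n ℝ} {g : ℝ → n → ℝ} {g' : n → ℝ}
    {s : Set ℝ} {t : ℝ} (hF : HasDerivWithinAt F F' s t) (hg : HasDerivWithinAt g g' s t) :
    HasDerivWithinAt (fun x => F x *ᵥ g x) (F' *ᵥ g t + F t *ᵥ g') s t := by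
  have h := (Matrix.mulVecBilin ℝ ℝ (m := m) (n := n)
    (A := ℝ)).toContinuousBilinearMap.hasDerivWithinAt_of_bilinear hF hg
  rw [add_comm]
  exact h

/-- A matrix-valued function that is continuous and invertible on `s` has continuous inverse
on `s`. -/
theorem ContinuousOn.matrix_inv {n : Type*} [Fintype n] [DecidableEq n] {F : ℝ → Matrix n n ℝ}
    {s : Set ℝ} (hF : ContinuousOn F s) (hinv : ∀ t ∈ s, IsUnit (F t)) :
    ContinuousOn (fun t => (F t)⁻¹) s := by
  rw [continuousOn_iff_continuous_domRestrict] at hF ⊢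
  have hdet : ∀ t : s, (F t).det ≠ 0 := fun t =>
    ((Matrix.isUnit_iff_isUnit_det _).1 (hinv t t.2)).ne_zero
  have h : s.domRestrict (fun t => (F t)⁻¹) = fun t : s => (F t).det⁻¹ • (F t).adjugate := by
    ext1 t
    simp [Matrix.inv_def]
  rw [h]
  exact (hF.matrix_det.inv₀ hdet).smul hF.matrix_adjugate

theorem ltv_controllable_of_gramian_invertible
    (n p : ℕ)
    (A : ℝ → Matrix (Fin n) (Fin n) ℝ)
    (B : ℝ → Matrix (Fin n) (Fin p) ℝ)
    (hA : ContinuousOn A (Set.Icc (0:ℝ) 1))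
    (hB : ContinuousOn B (Set.Icc (0:ℝ) 1))
    (Φ : ℝ → Matrix (Fin n) (Fin n) ℝ)
    (hΦ0 : Φ 0 = 1)
    (hinv : ∀ t ∈ Set.Icc (0:ℝ) 1, IsUnit (Φ t))
    (hΦ : ∀ t ∈ Set.Icc (0:ℝ) 1,
      HasDerivWithinAt Φ (A t * Φ t) (Set.Icc (0:ℝ) 1) t)
    (hW : IsUnit (∫ s in (0:ℝ)..1, ((Φ s)⁻¹ * B s) * ((Φ s)⁻¹ * B s)ᵀ)) :
    ∀ z₀ z₁ : Fin n → ℝ,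
      ∃ (v : ℝ → (Fin p → ℝ)) (z : ℝ → (Fin n → ℝ)),
        Continuous v ∧ z 0 = z₀ ∧ z 1 = z₁ ∧
        ∀ t ∈ Set.Icc (0:ℝ) 1,
          HasDerivWithinAt z (A t *ᵥ z t + B t *ᵥ v t) (Set.Icc (0:ℝ) 1) t := by
  intro z₀ z₁
  have hΦc : ContinuousOn Φ (Set.Icc 0 1) := fun t ht => (hΦ t ht).continuousWithinAt
  have hinvc := hΦc.matrix_inv hinv
  -- a continuous extension to `ℝ` of `s ↦ (Φ s)⁻¹ * B s`
  obtain ⟨M, hMc, hM⟩ : ∃ M : ℝ → Matrix (Fin n) (Fin p) ℝ, Continuous M ∧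
      ∀ t ∈ Set.Icc (0:ℝ) 1, M t = (Φ t)⁻¹ * B t := by
    refine ⟨Set.IccExtend zero_le_one
      ((Set.Icc (0:ℝ) 1).domRestrict fun t => (Φ t)⁻¹ * B t), ?_, fun t ht => ?_⟩
    · refine Continuous.Icc_extend' ?_
      rw [continuousOn_iff_continuous_domRestrict] at hinvc hB
      exact hinvc.matrix_mul hB
    · rw [Set.IccExtend_of_mem _ _ ht]
      rfl
  have hMM : Continuous fun s => M s * (M s)ᵀ := hMc.matrix_mul hMc.matrix_transpose
  set G : ℝ → Matrix (Fin n) (Fin n) ℝ := fun t => ∫ s in (0:ℝ)..t, M s * (M s)ᵀ with hG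
  have hG1 : IsUnit (G 1) := by
    convert hW using 1
    refine intervalIntegral.integral_congr fun s hs => ?_
    rw [Set.uIcc_of_le zero_le_one] at hs
    simp only [hM s hs]
  have hGd : ∀ t, HasDerivAt G (M t * (M t)ᵀ) t := fun t =>
    (hMM.integral_hasStrictDerivAt 0 t).hasDerivAt
  set η : Fin n → ℝ := (G 1)⁻¹ *ᵥ ((Φ 1)⁻¹ *ᵥ z₁ - z₀) with hη
  have hcancel : ∀ {X : Matrix (Fin n) (Fin n) ℝ}, IsUnit X → X * X⁻¹ = 1 := fun hX =>
    Matrix.mul_nonsing_inv _ ((Matrix.isUnit_iff_isUnit_det _).1 hX)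
  refine ⟨fun t => (M t)ᵀ *ᵥ η, fun t => Φ t *ᵥ (z₀ + G t *ᵥ η),
    hMc.matrix_transpose.matrix_mulVec continuous_const, ?_, ?_, fun t ht => ?_⟩
  · simp [hG, hΦ0]
  · simp only [hη, Matrix.mulVec_mulVec, hcancel hG1, Matrix.one_mulVec, add_sub_cancel,
      hcancel (hinv 1 (Set.right_mem_Icc.2 zero_le_one))]
  · have hd := (hΦ t ht).matrix_mulVec
      (((hGd t).hasDerivWithinAt.matrix_mulVec (hasDerivWithinAt_const t _ η)).const_add z₀)
    convert hd using 1
    have hB' : B t = Φ t * M t := by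
      rw [hM t ht, ← Matrix.mul_assoc, hcancel (hinv t ht), Matrix.one_mul]
    simp only [hB', Matrix.mulVec_zero, add_zero, Matrix.mulVec_mulVec, Matrix.mul_assoc]
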